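/- Let T_n(t) (n ≥ 0, t ≥ 0) be strongly continuous contraction semigroups of bounded linear operators on a Banach space X such that T_n(t)u → T_0(t)u in X as n → ∞ for every u ∈ X and every t > 0. Then for every fixed u ∈ X, the convergence T_n(t)u → T_0(t)u is uniform in t ∈ [0,1]; that is, sup_{0≤t≤1} ‖T_n(t)u − T_0(t)u‖ → 0 as n → ∞. -/

import Mathlib

open Filter Topology

/-- cf. Yosida, Theorem IX.12.1. If `T_n(t)` are strongly
continuous contraction semigroups on a Banach space `X` with
`T_n(t)u → T_0(t)u` for every `u ∈ X` and `t > 0`, then for every fixed `u` the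
convergence is uniform in `t ∈ [0,1]`. -/
theorem contraction_semigroup_convergence_uniform_on_unit_interval
    {X : Type*} [NormedAddCommGroup X] [NormedSpace ℝ X] [CompleteSpace X]
    (T : ℕ → ℝ → X →L[ℝ] X)
    (hid : ∀ n, T n 0 = ContinuousLinearMap.id ℝ X)
    (hsemigroup : ∀ n, ∀ s ≥ (0:ℝ), ∀ t ≥ (0:ℝ),
      T n (s + t) = (T n s).comp (T n t))
    (hcontraction : ∀ n, ∀ t ≥ (0:ℝ), ‖T n t‖ ≤ 1)
    (hstrong_cont : ∀ n (u : X), ContinuousOn (fun t => T n t u) (Set.Ici 0))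
    (hconv : ∀ (u : X) (t : ℝ), 0 < t →
      Tendsto (fun n => T n t u) atTop (𝓝 (T 0 t u))) :
    ∀ u : X, TendstoUniformlyOn (fun n t => T n t u) (fun t => T 0 t u)
      atTop (Set.Icc (0:ℝ) 1) := by
  intro u
  have hle : ∀ n, ∀ t ≥ (0:ℝ), ∀ x : X, ‖T n t x‖ ≤ ‖x‖ := fun n t ht x => by
    simpa using (T n t).le_of_opNorm_le (hcontraction n t ht) x
  have hint : ∀ n, ∀ a ≥ (0:ℝ), ∀ b ≥ (0:ℝ),
      IntervalIntegrable (fun s => T n s u) MeasureTheory.volume a b := by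
    intro n a ha b hb
    apply ContinuousOn.intervalIntegrable
    refine (hstrong_cont n u).mono ?_
    intro x hx
    have := (Set.mem_uIcc.1 hx)
    rcases this with h | h
    · exact ha.le.trans h.1
    · exact hb.le.trans h.1
  -- equicontinuity at zero
  have key : ∀ ε > (0:ℝ), ∃ δ > (0:ℝ), (∀ t, 0 ≤ t → t ≤ δ → ‖T 0 t u - u‖ ≤ ε) ∧
      ∀ᶠ n in atTop, ∀ t, 0 ≤ t → t ≤ δ → ‖T n t u - u‖ ≤ 5 * ε := by
    intro ε hε
    have h0 := hstrong_cont 0 u 0 (Set.mem_Ici.2 le_rfl)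
    rw [Metric.continuousWithinAt_iff] at h0
    obtain ⟨η, hη, hc⟩ := h0 ε hε
    set h := η / 2 with hh
    have hpos : 0 < h := by positivity
    have hc0 : ∀ t, 0 ≤ t → t ≤ h → ‖T 0 t u - u‖ ≤ ε := by
      intro t ht hth
      have := hc (x := t) ht (by rw [Real.dist_eq, sub_zero, abs_of_nonneg ht]; linarith)
      rw [dist_eq_norm, hid] at this
      exact this.le
    set U : ℕ → X := fun n => ∫ s in (0:ℝ)..h, T n s u with hU
    have hUlim : Tendsto U atTop (𝓝 (U 0)) := by
      apply intervalIntegral.tendsto_integral_filter_of_dominated_convergence (fun _ => ‖u‖)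
      · exact Eventually.of_forall fun n => by
          have := (hint n 0 le_rfl h hpos.le).aestronglyMeasurable
          rwa [Set.uIoc_of_le hpos.le]
      · refine Eventually.of_forall fun n => Eventually.of_forall fun s hs => ?_
        rw [Set.uIoc_of_le hpos.le] at hs
        exact hle n s hs.1.le u
      · simp
      · refine Eventually.of_forall fun s hs => ?_
        rw [Set.uIoc_of_le hpos.le] at hs
        exact hconv u s hs.1
    have hU0 : ‖U 0 - h • u‖ ≤ ε * h := by
      have e : U 0 - h • u = ∫ s in (0:ℝ)..h, (T 0 s u - u) := by
        rw [intervalIntegral.integral_sub (hint 0 0 le_rfl h hpos.le) (by simp)]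
        simp [hU]
      rw [e]
      have := intervalIntegral.norm_integral_le_of_norm_le_const (a := (0:ℝ)) (b := h)
        (C := ε) (f := fun s => T 0 s u - u) (fun s hs => by
          rw [Set.uIoc_of_le hpos.le] at hs
          exact hc0 s hs.1.le hs.2)
      simpa [abs_of_pos hpos] using this
    have hUt : ∀ n t, 0 ≤ t → ‖T n t (U n) - U n‖ ≤ 2 * t * ‖u‖ := by
      intro n t ht
      have e1 : T n t (U n) = ∫ s in t..(t + h), T n s u := by
        rw [hU]
        simp only
        rw [← (T n t).intervalIntegral_comp_comm (hint n 0 le_rfl h hpos.le)]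
        have : ∫ s in t..(t + h), T n s u = ∫ s in (0:ℝ)..h, T n (t + s) u := by
          rw [intervalIntegral.integral_comp_add_left (fun s => T n s u)]
          simp
        rw [this]
        apply intervalIntegral.integral_congr
        intro s hs
        rw [Set.uIcc_of_le hpos.le] at hs
        simp only
        rw [hsemigroup n t ht s hs.1]
        rfl
      have e2 : T n t (U n) - U n
          = (∫ s in h..(t + h), T n s u) - ∫ s in (0:ℝ)..t, T n s u := by
        rw [e1]
        have a1 := intervalIntegral.integral_add_adjacent_intervals
          (hint n 0 le_rfl t ht) (hint n t ht (t + h) (by positivity))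
        have a2 := intervalIntegral.integral_add_adjacent_intervals
          (hint n 0 le_rfl h hpos.le) (hint n h hpos.le (t + h) (by positivity))
        rw [sub_eq_sub_iff_add_eq_add, add_comm, a1, ← a2]
        exact add_comm _ _
      have b1 : ‖∫ s in h..(t + h), T n s u‖ ≤ ‖u‖ * |t + h - h| := by
        apply intervalIntegral.norm_integral_le_of_norm_le_const
        intro s hs
        rw [Set.uIoc_of_le (by linarith)] at hs
        exact hle n s (hpos.le.trans hs.1.le) u
      have b2 : ‖∫ s in (0:ℝ)..t, T n s u‖ ≤ ‖u‖ * |t - 0| := by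
        apply intervalIntegral.norm_integral_le_of_norm_le_const
        intro s hs
        rw [Set.uIoc_of_le ht] at hs
        exact hle n s hs.1.le u
      rw [add_sub_cancel_right, abs_of_nonneg ht] at b1
      rw [sub_zero, abs_of_nonneg ht] at b2
      rw [e2]
      refine (norm_sub_le _ _).trans ?_
      linarith
    have hd : 0 < ε * h / (2 * ‖u‖ + 1) := by positivity
    refine ⟨min h (ε * h / (2 * ‖u‖ + 1)), lt_min hpos hd,
      fun t ht htd => hc0 t ht (htd.trans (min_le_left _ _)), ?_⟩
    have hev := (Metric.tendsto_nhds.1 hUlim) (ε * h) (by positivity)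
    filter_upwards [hev] with n hn t ht htd
    rw [dist_eq_norm] at hn
    have ht2 : t * (2 * ‖u‖ + 1) ≤ ε * h :=
      (le_div_iff₀ (by positivity)).1 (htd.trans (min_le_right _ _))
    have hw : ‖U n - h • u‖ ≤ 2 * (ε * h) := by
      have := norm_add_le (U n - U 0) (U 0 - h • u)
      rw [sub_add_sub_cancel] at this
      linarith
    have e : h • (T n t u - u)
        = (T n t (U n) - U n) - T n t (U n - h • u) + (U n - h • u) := by
      rw [map_sub, map_smul, smul_sub]; abel
    have : h * ‖T n t u - u‖ ≤ h * (5 * ε) := by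
      calc h * ‖T n t u - u‖ = ‖h • (T n t u - u)‖ := by
            rw [norm_smul, Real.norm_of_nonneg hpos.le]
        _ ≤ ‖T n t (U n) - U n‖ + ‖T n t (U n - h • u)‖ + ‖U n - h • u‖ := by
            rw [e]
            exact (norm_add_le _ _).trans (by gcongr; exact norm_sub_le _ _)
        _ ≤ h * (5 * ε) := by
            have h1 := hUt n t ht
            have h2 := hle n t ht (U n - h • u)
            linarith
    exact le_of_mul_le_mul_left this hpos
  rw [Metric.tendstoUniformlyOn_iff]
  intro ε hε
  obtain ⟨δ, hδ, hδ0, hδn⟩ := key (ε / 10) (by positivity)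
  have hgrid : ∀ᶠ n in atTop, ∀ k ∈ Finset.range (⌊1 / δ⌋₊ + 1),
      ‖T n (k * δ) u - T 0 (k * δ) u‖ < ε / 10 := by
    rw [Filter.eventually_all_finset]
    intro k _
    have hl : Tendsto (fun n => T n (k * δ) u) atTop (𝓝 (T 0 (k * δ) u)) := by
      rcases Nat.eq_zero_or_pos k with rfl | hk
      · simp [hid]
      · exact hconv u _ (by positivity)
    have := (Metric.tendsto_nhds.1 hl) (ε / 10) (by positivity)
    simpa only [dist_eq_norm] using this
  filter_upwards [hgrid, hδn] with n hn1 hn2 t ht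
  set k := ⌊t / δ⌋₊ with hk
  have hk1 : (k : ℝ) * δ ≤ t :=
    (le_div_iff₀ hδ).1 (Nat.floor_le (div_nonneg ht.1 hδ.le))
  have hk2 : t ≤ k * δ + δ := by
    have := (div_lt_iff₀ hδ).1 (Nat.lt_floor_add_one (t / δ))
    rw [add_mul, one_mul] at this
    exact this.le
  have hkm : k ∈ Finset.range (⌊1 / δ⌋₊ + 1) := by
    rw [Finset.mem_range, Nat.lt_succ_iff]
    exact Nat.floor_le_floor (div_le_div_of_nonneg_right ht.2 hδ.le)
  have hkn : (0:ℝ) ≤ k * δ := by positivity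
  have step : ∀ m, ‖T m t u - T m (k * δ) u‖ ≤ ‖T m (t - k * δ) u - u‖ := by
    intro m
    have e : T m t = (T m (k * δ)).comp (T m (t - k * δ)) := by
      rw [← hsemigroup m _ hkn _ (sub_nonneg.2 hk1), add_sub_cancel]
    rw [e, ContinuousLinearMap.comp_apply, ← map_sub]
    exact hle m _ hkn _
  have s0 := (step 0).trans (hδ0 _ (sub_nonneg.2 hk1) (by linarith))
  have sn := (step n).trans (hn2 _ (sub_nonneg.2 hk1) (by linarith))
  have sg := hn1 k hkm
  rw [dist_eq_norm]
  have e : T 0 t u - T n t u = (T 0 t u - T 0 (k * δ) u) - (T n (k * δ) u - T 0 (k * δ) u)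
      - (T n t u - T n (k * δ) u) := by abel
  rw [e]
  have n1 := norm_sub_le ((T 0 t u - T 0 (k * δ) u) - (T n (k * δ) u - T 0 (k * δ) u))
    (T n t u - T n (k * δ) u)
  have n2 := norm_sub_le (T 0 t u - T 0 (k * δ) u) (T n (k * δ) u - T 0 (k * δ) u)
  linarith
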